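/- Let P : Matrix (Fin 3) (Fin 3) ℝ be symmetric and nonzero, and let Y : Fin 3 → ℝ be nonzero. Then there is no symmetric matrix R : Matrix (Fin 3) (Fin 3) ℝ such that P a b * Y c = V_R a b c for all a, b, c. (This is the algebraic core of the non-metrisability of the non-flat Newtonian projective structures, whose projective Weyl tensor has the form V^{ab}{}_c = X^{ab}Y_c with X^{ab} symmetric and nonzero: the total symmetrisation X_{(ab}Y_{c)} is nonzero, conflicting with the hook symmetry V_{(abc)} = 0 of the metric case.) -/

import Mathlib

/-! The tensor `V_R` has hook symmetry: its cyclic sum vanishes (`VR_cyclic`), because `eps` is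
antisymmetric under exchange of its outer indices. If `P a b * Y c = V_R a b c` then the cyclic
sum of `P a b * Y c` vanishes as well. Fixing `k` with `Y k ≠ 0`, the index triples `(k, k, k)`,
`(k, k, a)` and `(a, b, k)` give in turn `P k k = 0`, `P k a = 0` and `P a b = 0`, so `P = 0`. -/

noncomputable section

open Finset

/-- The Levi-Civita symbol on `Fin 3`. -/
def eps (a b c : Fin 3) : ℝ :=
  if (a, b, c) = ((0 : Fin 3), (1 : Fin 3), (2 : Fin 3)) ∨
     (a, b, c) = ((1 : Fin 3), (2 : Fin 3), (0 : Fin 3)) ∨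
     (a, b, c) = ((2 : Fin 3), (0 : Fin 3), (1 : Fin 3)) then 1
  else if (a, b, c) = ((0 : Fin 3), (2 : Fin 3), (1 : Fin 3)) ∨
          (a, b, c) = ((2 : Fin 3), (1 : Fin 3), (0 : Fin 3)) ∨
          (a, b, c) = ((1 : Fin 3), (0 : Fin 3), (2 : Fin 3)) then -1
  else 0

/-- The metric-form tensor `V_R a b c = ∑_d (R d a * ε b d c + R d b * ε a d c)`,
tensorially `V^{ab}{}_c = 2 R^{d(a} ε^{b)}{}_{dc}`. -/
def VR (R : Matrix (Fin 3) (Fin 3) ℝ) (a b c : Fin 3) : ℝ :=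
  ∑ d, (R d a * eps b d c + R d b * eps a d c)

/-- A Weyl-type tensor: `V a b c = V b a c` and `∑_a V a b a = 0`. -/
def IsWeyl (V : Fin 3 → Fin 3 → Fin 3 → ℝ) : Prop :=
  (∀ a b c, V a b c = V b a c) ∧ (∀ b, ∑ a, V a b a = 0)

/-- The quadratic obstruction `Q_{ab}{}^c = ε_{pq(a} V^{pr}{}_{b)} V^{qc}{}_r`. -/
def covQ (V : Fin 3 → Fin 3 → Fin 3 → ℝ) (a b c : Fin 3) : ℝ :=
  (1 / 2) * ∑ p, ∑ q, ∑ r, (eps p q a * V p r b + eps p q b * V p r a) * V q c r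

/-- The cubic scalar `S = ε_{abc} V^{ap}{}_q V^{bq}{}_r V^{cr}{}_p`. -/
def covS (V : Fin 3 → Fin 3 → Fin 3 → ℝ) : ℝ :=
  ∑ a, ∑ b, ∑ c, ∑ p, ∑ q, ∑ r, eps a b c * V a p q * V b q r * V c r p

/-- Symmetrisation (average) over two indices. -/
def sym2 (f : Fin 3 → Fin 3 → ℝ) (a b : Fin 3) : ℝ := (1 / 2) * (f a b + f b a)

/-- Symmetrisation (average) over three indices. -/
def sym3 (f : Fin 3 → Fin 3 → Fin 3 → ℝ) (a b c : Fin 3) : ℝ :=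
  (1 / 6) * ∑ π : Equiv.Perm (Fin 3),
    f (![a, b, c] (π 0)) (![a, b, c] (π 1)) (![a, b, c] (π 2))

/-- Symmetrisation (average) over four indices. -/
def sym4 (f : Fin 3 → Fin 3 → Fin 3 → Fin 3 → ℝ) (a b c d : Fin 3) : ℝ :=
  (1 / 24) * ∑ π : Equiv.Perm (Fin 4),
    f (![a, b, c, d] (π 0)) (![a, b, c, d] (π 1)) (![a, b, c, d] (π 2)) (![a, b, c, d] (π 3))

/-- Symmetrisation (average) over six indices. -/
def sym6 (f : Fin 3 → Fin 3 → Fin 3 → Fin 3 → Fin 3 → Fin 3 → ℝ)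
    (a b c d e f' : Fin 3) : ℝ :=
  (1 / 720) * ∑ π : Equiv.Perm (Fin 6),
    f (![a, b, c, d, e, f'] (π 0)) (![a, b, c, d, e, f'] (π 1)) (![a, b, c, d, e, f'] (π 2))
      (![a, b, c, d, e, f'] (π 3)) (![a, b, c, d, e, f'] (π 4)) (![a, b, c, d, e, f'] (π 5))

/-- `A^{ab} = ⊙(V^{ap}{}_q V^{bq}{}_p)`. -/
def covA (V : Fin 3 → Fin 3 → Fin 3 → ℝ) (a b : Fin 3) : ℝ :=
  ∑ p, ∑ q, V a p q * V b q p

/-- `B^{abc} = ⊙(V^{ap}{}_q V^{bq}{}_r V^{cr}{}_p)`. -/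
def covB (V : Fin 3 → Fin 3 → Fin 3 → ℝ) (a b c : Fin 3) : ℝ :=
  sym3 (fun a b c => ∑ p, ∑ q, ∑ r, V a p q * V b q r * V c r p) a b c

/-- `C^{abc} = ⊙(V^{ab}{}_p V^{pq}{}_r V^{cr}{}_q)`. -/
def covC (V : Fin 3 → Fin 3 → Fin 3 → ℝ) (a b c : Fin 3) : ℝ :=
  sym3 (fun a b c => ∑ p, ∑ q, ∑ r, V a b p * V p q r * V c r q) a b c

/-- `D^{abcd} = ⊙(V^{ab}{}_p V^{pq}{}_r V^{cr}{}_s V^{ds}{}_q)`. -/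
def covD (V : Fin 3 → Fin 3 → Fin 3 → ℝ) (a b c d : Fin 3) : ℝ :=
  sym4 (fun a b c d => ∑ p, ∑ q, ∑ r, ∑ s, V a b p * V p q r * V c r s * V d s q) a b c d

/-- `F^{abcd} = ⊙(V^{ab}{}_p V^{cd}{}_q V^{pr}{}_s V^{qs}{}_r)`. -/
def covF (V : Fin 3 → Fin 3 → Fin 3 → ℝ) (a b c d : Fin 3) : ℝ :=
  sym4 (fun a b c d => ∑ p, ∑ q, ∑ r, ∑ s, V a b p * V c d q * V p r s * V q s r) a b c d

/-- `J^{abcdef} = ⊙(V^{ab}{}_p V^{cd}{}_q V^{pq}{}_r V^{er}{}_s V^{st}{}_u V^{fu}{}_t)`. -/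
def covJ (V : Fin 3 → Fin 3 → Fin 3 → ℝ) (a b c d e f : Fin 3) : ℝ :=
  sym6 (fun a b c d e f => ∑ p, ∑ q, ∑ r, ∑ s, ∑ t, ∑ u,
    V a b p * V c d q * V p q r * V e r s * V s t u * V f u t) a b c d e f

/-- `K^{abcdef} = ⊙(V^{ab}{}_p V^{cd}{}_q V^{ep}{}_r V^{fq}{}_s V^{rt}{}_u V^{su}{}_t)`. -/
def covK (V : Fin 3 → Fin 3 → Fin 3 → ℝ) (a b c d e f : Fin 3) : ℝ :=
  sym6 (fun a b c d e f => ∑ p, ∑ q, ∑ r, ∑ s, ∑ t, ∑ u,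
    V a b p * V c d q * V e p r * V f q s * V r t u * V s u t) a b c d e f

/-- `L^{abcdef} = ⊙(V^{ab}{}_p V^{cd}{}_q V^{pq}{}_r V^{rs}{}_t V^{et}{}_u V^{fu}{}_s)`. -/
def covL (V : Fin 3 → Fin 3 → Fin 3 → ℝ) (a b c d e f : Fin 3) : ℝ :=
  sym6 (fun a b c d e f => ∑ p, ∑ q, ∑ r, ∑ s, ∑ t, ∑ u,
    V a b p * V c d q * V p q r * V r s t * V e t u * V f u s) a b c d e f

/-- The sextic obstruction
`T = 24J + 12K − 24L − 24B⊙B − 24C⊙C + 40B⊙C − 24A⊙D + 6A⊙F`. -/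
def covT (V : Fin 3 → Fin 3 → Fin 3 → ℝ) (a b c d e f : Fin 3) : ℝ :=
  24 * covJ V a b c d e f + 12 * covK V a b c d e f - 24 * covL V a b c d e f
    - 24 * sym6 (fun a b c d e f => covB V a b c * covB V d e f) a b c d e f
    - 24 * sym6 (fun a b c d e f => covC V a b c * covC V d e f) a b c d e f
    + 40 * sym6 (fun a b c d e f => covB V a b c * covC V d e f) a b c d e f
    - 24 * sym6 (fun a b c d e f => covA V a b * covD V c d e f) a b c d e f
    + 6 * sym6 (fun a b c d e f => covA V a b * covF V c d e f) a b c d e f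

lemma eps_swap_outer (a b c : Fin 3) : eps c b a = -eps a b c := by
  fin_cases a <;> fin_cases b <;> fin_cases c <;> simp [eps]

/-- Hook symmetry of the metric-form tensor: the six terms cancel in pairs by
`eps_swap_outer`. -/
lemma VR_cyclic (R : Matrix (Fin 3) (Fin 3) ℝ) (a b c : Fin 3) :
    VR R a b c + VR R b c a + VR R c a b = 0 := by
  simp only [VR, ← Finset.sum_add_distrib]
  refine Finset.sum_eq_zero fun d _ => ?_
  rw [eps_swap_outer b d c, eps_swap_outer a d c, eps_swap_outer a d b]
  ring

/-- A tensor `P^{ab} Y_c` with `P` symmetric nonzero and `Y` nonzero is never of metric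
form `V_R` (algebraic core of the non-metrisability of non-flat Newtonian structures). -/
theorem statement15 (P : Matrix (Fin 3) (Fin 3) ℝ) (hPsymm : ∀ i j, P i j = P j i)
    (hP : P ≠ 0) (Y : Fin 3 → ℝ) (hY : Y ≠ 0) :
    ¬ ∃ R : Matrix (Fin 3) (Fin 3) ℝ, (∀ i j, R i j = R j i) ∧
        ∀ a b c, P a b * Y c = VR R a b c := by
  rintro ⟨R, -, h⟩
  obtain ⟨k, hk⟩ := Function.ne_iff.mp hY
  simp only [Pi.zero_apply] at hk
  have hcyc : ∀ a b c, P a b * Y c + P b c * Y a + P c a * Y b = 0 := fun a b c => by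
    rw [h, h, h, VR_cyclic]
  have hkk : P k k = 0 := by
    have : P k k * Y k = 0 := by linarith [hcyc k k k]
    exact (mul_eq_zero.mp this).resolve_right hk
  have hka : ∀ a, P k a = 0 := fun a => by
    have h1 := hcyc k k a
    rw [hkk, hPsymm a k] at h1
    have : P k a * Y k = 0 := by linarith
    exact (mul_eq_zero.mp this).resolve_right hk
  refine hP (Matrix.ext fun a b => ?_)
  have h1 := hcyc a b k
  rw [hPsymm b k, hka, hka, zero_mul, zero_mul, add_zero, add_zero] at h1
  exact (mul_eq_zero.mp h1).resolve_right hk
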